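/- Let p ∈ (2,∞). There is a constant C = C(p) such that for every Schwartz function G : ℂ → ℂ and every k ∈ ℂ with k ≠ 0, ‖∂̄⁻¹[e_{−k} G]‖_{L^p(ℂ)} ≤ C |k|^{−1} ‖∇G‖_{L^{2p/(p+2)}(ℂ)}. -/

import Mathlib

open MeasureTheory Complex ComplexConjugate Filter Bornology
open scoped ENNReal Topology SchwartzMap

noncomputable section

/-- `e_k(z) = exp(i(conj k · z + k · conj z)/2)`. -/
def ek (k z : ℂ) : ℂ := Complex.exp (Complex.I * (conj k * z + k * conj z) / 2)

/-- The solid Cauchy transform `∂̄⁻¹[h](z) = (1/π) ∫ h(w)/(z-w) dA(w)`. -/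
def dbarInv (h : ℂ → ℂ) (z : ℂ) : ℂ := (Real.pi : ℂ)⁻¹ * ∫ w : ℂ, h w / (z - w)

/-- The solid Cauchy transform `∂_z⁻¹[h](z) = (1/π) ∫ h(w)/(conj z - conj w) dA(w)`. -/
def dzInv (h : ℂ → ℂ) (z : ℂ) : ℂ := (Real.pi : ℂ)⁻¹ * ∫ w : ℂ, h w / (conj z - conj w)

/-- The operator `S^k_q[F] = ∂̄⁻¹[e_{-k} q ∂_z⁻¹[e_k conj(q) F]]`. -/
def Sk (k : ℂ) (q F : ℂ → ℂ) : ℂ → ℂ :=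
  dbarInv fun z => ek (-k) z * q z * dzInv (fun w => ek k w * conj (q w) * F w) z

/-- The Fourier transform on `ℂ ≅ ℝ²`. -/
def FT (f : ℂ → ℂ) (ξ : ℂ) : ℂ :=
  ∫ z : ℂ, Complex.exp (-(2 * Real.pi * Complex.I) * ((z.re * ξ.re + z.im * ξ.im : ℝ) : ℂ)) * f z

/-- The inverse Fourier transform on `ℂ ≅ ℝ²`. -/
def FTinv (f : ℂ → ℂ) (x : ℂ) : ℂ :=
  ∫ ξ : ℂ, Complex.exp ((2 * Real.pi * Complex.I) * ((x.re * ξ.re + x.im * ξ.im : ℝ) : ℂ)) * f ξ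

/-- `D^s`, the Fourier multiplier with symbol `|ξ|^s`. -/
def Ds (s : ℝ) (f : ℂ → ℂ) : ℂ → ℂ :=
  FTinv fun ξ => ((‖ξ‖ ^ s : ℝ) : ℂ) * FT f ξ

/-- The weighted Sobolev norm
`‖q‖_{H^{s,s}} = max {‖q‖₂, ‖D^s q‖₂, ‖|·|^s q‖₂}`, where by Plancherel
`‖D^s q‖₂ = ‖ |ξ|^s (FT q)(ξ) ‖₂`. -/
def HssNorm (s : ℝ) (q : ℂ → ℂ) : ℝ≥0∞ :=
  max (eLpNorm q 2 volume)
    (max (eLpNorm (fun ξ : ℂ => ((‖ξ‖ ^ s : ℝ) : ℂ) * FT q ξ) 2 volume)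
      (eLpNorm (fun z : ℂ => ((‖z‖ ^ s : ℝ) : ℂ) * q z) 2 volume))

/-- The Cauchy–Riemann operator `∂̄ = (∂/∂z₁ + i ∂/∂z₂)/2`. -/
def dbar (G : ℂ → ℂ) (z : ℂ) : ℂ := (fderiv ℝ G z 1 + Complex.I * fderiv ℝ G z Complex.I) / 2

end

/-- A dyadic centred Hardy–Littlewood maximal function on `ℂ`, normalised by the squared radius. -/
noncomputable def dyadicMaximal (f : ℂ → ℝ≥0∞) (x : ℂ) : ℝ≥0∞ :=
  ⨆ n : ℤ, (∫⁻ y in Metric.closedBall x ((2 : ℝ) ^ n), f y) / ENNReal.ofReal ((2 : ℝ) ^ n) ^ 2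

lemma measurable_lintegral_closedBall {f : ℂ → ℝ≥0∞} (hf : Measurable f) (r : ℝ) :
    Measurable fun x : ℂ => ∫⁻ y in Metric.closedBall x r, f y := by
  have h : (fun x : ℂ => ∫⁻ y in Metric.closedBall x r, f y) =
      fun x => ∫⁻ y, {p : ℂ × ℂ | dist p.2 p.1 ≤ r}.indicator (fun p => f p.2) (x, y) := by
    funext x
    rw [← lintegral_indicator Metric.isClosed_closedBall.measurableSet]
    rfl
  rw [h]
  refine Measurable.lintegral_prod_right' (f := fun p : ℂ × ℂ =>
    {p : ℂ × ℂ | dist p.2 p.1 ≤ r}.indicator (fun p => f p.2) p) ?_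
  exact (hf.comp measurable_snd).indicator
    (measurableSet_le (measurable_snd.dist measurable_fst) measurable_const)

lemma measurable_dyadicMaximal {f : ℂ → ℝ≥0∞} (hf : Measurable f) :
    Measurable (dyadicMaximal f) :=
  Measurable.iSup fun _ => (measurable_lintegral_closedBall hf _).div_const _

lemma ofReal_two_zpow_sq_ne_zero (n : ℤ) : ENNReal.ofReal ((2 : ℝ) ^ n) ^ 2 ≠ 0 := by
  have : (0 : ℝ) < (2 : ℝ) ^ n := by positivity
  exact pow_ne_zero _ (ENNReal.ofReal_pos.2 this).ne'

lemma ofReal_two_zpow_sq_ne_top (n : ℤ) : ENNReal.ofReal ((2 : ℝ) ^ n) ^ 2 ≠ ⊤ :=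
  ENNReal.pow_ne_top ENNReal.ofReal_ne_top

lemma lintegral_closedBall_le_dyadicMaximal (f : ℂ → ℝ≥0∞) (x : ℂ) {r : ℝ} (hr : 0 < r) :
    ∫⁻ y in Metric.closedBall x r, f y ≤ 4 * ENNReal.ofReal r ^ 2 * dyadicMaximal f x := by
  obtain ⟨n, hn, hn'⟩ := exists_mem_Ico_zpow hr (one_lt_two : (1 : ℝ) < 2)
  calc ∫⁻ y in Metric.closedBall x r, f y
      ≤ ∫⁻ y in Metric.closedBall x ((2 : ℝ) ^ (n + 1)), f y :=
        lintegral_mono_set (Metric.closedBall_subset_closedBall hn'.le)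
    _ = ENNReal.ofReal ((2 : ℝ) ^ (n + 1)) ^ 2 *
        ((∫⁻ y in Metric.closedBall x ((2 : ℝ) ^ (n + 1)), f y) /
          ENNReal.ofReal ((2 : ℝ) ^ (n + 1)) ^ 2) :=
        (ENNReal.mul_div_cancel (ofReal_two_zpow_sq_ne_zero _) (ofReal_two_zpow_sq_ne_top _)).symm
    _ ≤ 4 * ENNReal.ofReal r ^ 2 * dyadicMaximal f x := by
        gcongr
        · calc ENNReal.ofReal ((2 : ℝ) ^ (n + 1)) ^ 2 ≤ ENNReal.ofReal (2 * r) ^ 2 := by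
                gcongr
                rw [zpow_add₀ two_ne_zero, zpow_one]
                linarith
            _ = 4 * ENNReal.ofReal r ^ 2 := by
                rw [ENNReal.ofReal_mul zero_le_two, mul_pow]
                norm_num
        · exact le_iSup (fun n : ℤ => (∫⁻ y in Metric.closedBall x ((2 : ℝ) ^ n), f y) /
            ENNReal.ofReal ((2 : ℝ) ^ n) ^ 2) (n + 1)

lemma dyadicMaximal_le_add_const {f g : ℂ → ℝ≥0∞} (hg : Measurable g) {c : ℝ≥0∞}
    (h : ∀ x, f x ≤ g x + c) (x : ℂ) :
    dyadicMaximal f x ≤ dyadicMaximal g x + c * NNReal.pi := by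
  refine iSup_le fun n => ?_
  rw [ENNReal.div_le_iff (ofReal_two_zpow_sq_ne_zero _) (ofReal_two_zpow_sq_ne_top _)]
  calc ∫⁻ y in Metric.closedBall x ((2 : ℝ) ^ n), f y
      ≤ ∫⁻ y in Metric.closedBall x ((2 : ℝ) ^ n), (g y + c) := lintegral_mono fun y => h y
    _ = (∫⁻ y in Metric.closedBall x ((2 : ℝ) ^ n), g y) +
          c * (ENNReal.ofReal ((2 : ℝ) ^ n) ^ 2 * NNReal.pi) := by
        rw [lintegral_add_left hg, lintegral_const, Measure.restrict_apply_univ,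
          Complex.volume_closedBall]
    _ ≤ dyadicMaximal g x * ENNReal.ofReal ((2 : ℝ) ^ n) ^ 2 +
          c * (ENNReal.ofReal ((2 : ℝ) ^ n) ^ 2 * NNReal.pi) := by
        gcongr
        rw [← ENNReal.div_le_iff (ofReal_two_zpow_sq_ne_zero _) (ofReal_two_zpow_sq_ne_top _)]
        exact le_iSup (fun n : ℤ => (∫⁻ y in Metric.closedBall x ((2 : ℝ) ^ n), g y) /
            ENNReal.ofReal ((2 : ℝ) ^ n) ^ 2) n
    _ = _ := by ring

/-- The weak type `(1, 1)` bound for the maximal function. -/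
lemma mul_volume_lt_dyadicMaximal_le (f : ℂ → ℝ≥0∞) {t : ℝ≥0∞} (ht : t ≠ 0) (ht' : t ≠ ⊤) :
    t * volume {x | t < dyadicMaximal f x} ≤ 25 * NNReal.pi * ∫⁻ y, f y := by
  by_cases hI : ∫⁻ y, f y = ⊤
  · rw [hI, ENNReal.mul_top (by simp [NNReal.pi_ne_zero])]
    exact le_top
  set E := {x | t < dyadicMaximal f x}
  have hn : ∀ x : E, ∃ n : ℤ,
      t * ENNReal.ofReal ((2 : ℝ) ^ n) ^ 2 < ∫⁻ y in Metric.closedBall (x : ℂ) ((2 : ℝ) ^ n), f y := by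
    intro x
    obtain ⟨n, hn⟩ := lt_iSup_iff.1 (show t < dyadicMaximal f x from x.2)
    exact ⟨n, (ENNReal.lt_div_iff_mul_lt (.inl (ofReal_two_zpow_sq_ne_zero _))
      (.inl (ofReal_two_zpow_sq_ne_top _))).1 hn⟩
  choose n hn using hn
  set r : E → ℝ := fun x => (2 : ℝ) ^ n x with hr
  have hr0 : ∀ x, 0 < r x := fun x => by positivity
  have hbound : ∀ x, r x ≤ √((∫⁻ y, f y) / t).toReal := by
    intro x
    apply Real.le_sqrt_of_sq_le
    have h1 : t * ENNReal.ofReal (r x) ^ 2 ≤ ∫⁻ y, f y :=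
      (hn x).le.trans (setLIntegral_le_lintegral _ _)
    rw [mul_comm, ← ENNReal.le_div_iff_mul_le (.inl ht) (.inl ht'),
      ← ENNReal.ofReal_pow (hr0 x).le] at h1
    exact (ENNReal.ofReal_le_iff_le_toReal (ENNReal.div_ne_top hI ht)).1 h1
  obtain ⟨u, -, hdisj, hcov⟩ := Vitali.exists_disjoint_subfamily_covering_enlargement_closedBall
    (Set.univ : Set E) (fun x => (x : ℂ)) r _ (fun x _ => hbound x) 5 (by norm_num)
  have hu : u.Countable := hdisj.countable_of_nonempty_interior fun x _ =>
    ⟨x, Metric.ball_subset_interior_closedBall (Metric.mem_ball_self (hr0 x))⟩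
  have := hu.to_subtype
  have hsub : E ⊆ ⋃ b : u, Metric.closedBall ((b : E) : ℂ) (5 * r b) := by
    intro x hx
    obtain ⟨b, hb, hb'⟩ := hcov ⟨x, hx⟩ trivial
    exact Set.mem_iUnion.2 ⟨⟨b, hb⟩, hb' (Metric.mem_closedBall_self (hr0 _).le)⟩
  calc t * volume E
      ≤ t * ∑' b : u, volume (Metric.closedBall ((b : E) : ℂ) (5 * r b)) := by
        gcongr
        exact (measure_mono hsub).trans (measure_iUnion_le _)
    _ = ∑' b : u, 25 * NNReal.pi * (t * ENNReal.ofReal (r b) ^ 2) := by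
        rw [← ENNReal.tsum_mul_left]
        congr 1 with b
        rw [Complex.volume_closedBall, ENNReal.ofReal_mul (by norm_num), mul_pow]
        norm_num
        ring
    _ ≤ ∑' b : u, 25 * NNReal.pi * ∫⁻ y in Metric.closedBall ((b : E) : ℂ) (r b), f y := by
        gcongr with b
        exact (hn b).le
    _ = 25 * NNReal.pi * ∫⁻ y in ⋃ b : u, Metric.closedBall ((b : E) : ℂ) (r b), f y := by
        rw [ENNReal.tsum_mul_left, lintegral_iUnion
          (fun b => Metric.isClosed_closedBall.measurableSet)]
        exact fun a b hab => hdisj a.2 b.2 (fun h => hab (Subtype.ext h))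
    _ ≤ 25 * NNReal.pi * ∫⁻ y, f y := by
        gcongr
        exact Measure.restrict_le_self

lemma lintegral_Ioi_indicator_rpow {a : ℝ≥0∞} (ha : a ≠ ⊤) {s : ℝ} (hs : -1 < s) :
    ∫⁻ t in Set.Ioi (0 : ℝ), {t | ENNReal.ofReal t < a}.indicator
      (fun t => ENNReal.ofReal (t ^ s)) t = ENNReal.ofReal (s + 1)⁻¹ * a ^ (s + 1) := by
  obtain ⟨b, rfl⟩ : ∃ b : NNReal, a = b := ⟨a.toNNReal, (ENNReal.coe_toNNReal ha).symm⟩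
  have hset : {t : ℝ | ENNReal.ofReal t < (b : ℝ≥0∞)} ∩ Set.Ioi 0 = Set.Ioo 0 (b : ℝ) := by
    ext t
    rw [Set.inter_comm]
    refine and_congr_right fun ht => ?_
    change 0 < t at ht
    change ENNReal.ofReal t < (b : ℝ≥0∞) ↔ t < b
    rw [← ENNReal.ofReal_coe_nnreal, ENNReal.ofReal_lt_ofReal_iff_of_nonneg ht.le]
  have hmeas : MeasurableSet {t : ℝ | ENNReal.ofReal t < (b : ℝ≥0∞)} :=
    measurableSet_lt ENNReal.measurable_ofReal measurable_const
  rw [lintegral_indicator hmeas, Measure.restrict_restrict hmeas, hset,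
    setLIntegral_congr Ioo_ae_eq_Ioc, ← ofReal_integral_eq_lintegral_ofReal,
    ← intervalIntegral.integral_of_le b.coe_nonneg, integral_rpow (.inl hs), Real.zero_rpow (by linarith),
    sub_zero, div_eq_inv_mul, ENNReal.ofReal_mul (by rw [inv_nonneg]; linarith),
    ← ENNReal.ofReal_rpow_of_nonneg b.coe_nonneg (by linarith)]
  · simp
  · exact (intervalIntegrable_iff_integrableOn_Ioc_of_le b.coe_nonneg).1
      (intervalIntegral.intervalIntegrable_rpow' hs)
  · refine (ae_restrict_iff' measurableSet_Ioc).2 (.of_forall fun t ht => ?_)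
    exact Real.rpow_nonneg ht.1.le _

/-- The strong type `(q, q)` bound for the maximal function. -/
lemma exists_lintegral_dyadicMaximal_rpow_le {q : ℝ} (hq : 1 < q) :
    ∃ C : ℝ≥0∞, C ≠ ⊤ ∧ ∀ f : ℂ → ℝ≥0∞, Measurable f → ∀ B : ℝ≥0∞, B ≠ ⊤ → (∀ x, f x ≤ B) →
      ∫⁻ x, dyadicMaximal f x ^ q ≤ C * ∫⁻ x, f x ^ q := by
  refine ⟨ENNReal.ofReal q * (50 * NNReal.pi *
    (ENNReal.ofReal (q - 2 + 1)⁻¹ * (2 * NNReal.pi) ^ (q - 1))), ?_, ?_⟩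
  · have : (2 * NNReal.pi : ℝ≥0∞) ^ (q - 1) ≠ ⊤ :=
      ENNReal.rpow_ne_top_of_nonneg (by linarith) (by finiteness)
    finiteness
  intro f hf B hB hfB
  have hpi : (NNReal.pi : ℝ≥0∞) ≠ 0 := by simp [NNReal.pi_ne_zero]
  have hMtop : ∀ x, dyadicMaximal f x ≠ ⊤ := by
    intro x
    have h := dyadicMaximal_le_add_const (f := f) (g := 0) measurable_zero (c := B)
      (by simpa using hfB) x
    have h0 : dyadicMaximal 0 x = 0 := by simp [dyadicMaximal]
    rw [h0, zero_add] at h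
    exact ne_top_of_le_ne_top (by finiteness) h
  have hweak : ∀ t ∈ Set.Ioi (0 : ℝ), volume {x | t < (dyadicMaximal f x).toReal} *
      ENNReal.ofReal (t ^ (q - 1)) ≤ 50 * NNReal.pi * (∫⁻ y, f y *
        {t | ENNReal.ofReal t < 2 * NNReal.pi * f y}.indicator
          (fun t => ENNReal.ofReal (t ^ (q - 2))) t) := by
    intro t ht
    have ht0 : ENNReal.ofReal t ≠ 0 := (ENNReal.ofReal_pos.2 ht).ne'
    set S := {y | ENNReal.ofReal t < 2 * NNReal.pi * f y} with hS
    have hSm : MeasurableSet S := measurableSet_lt measurable_const (hf.const_mul _)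
    have hset : {x | t < (dyadicMaximal f x).toReal} ⊆
        {x | ENNReal.ofReal t / 2 < dyadicMaximal (S.indicator f) x} := by
      intro x hx
      have hx' : ENNReal.ofReal t < dyadicMaximal f x :=
        (ENNReal.ofReal_lt_iff_lt_toReal (le_of_lt ht) (hMtop x)).2 hx
      have h := dyadicMaximal_le_add_const (f := f) (g := S.indicator f) (hf.indicator hSm)
        (c := ENNReal.ofReal t / (2 * NNReal.pi)) (fun y => by
          by_cases hy : y ∈ S
          · rw [Set.indicator_of_mem hy]; exact le_self_add
          · rw [Set.indicator_of_notMem hy, zero_add,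
              ENNReal.le_div_iff_mul_le (.inl (by simp [hpi])) (.inl (by finiteness)), mul_comm]
            exact not_lt.1 hy) x
      have h2 : ENNReal.ofReal t / (2 * NNReal.pi) * NNReal.pi = ENNReal.ofReal t / 2 := by
        rw [ENNReal.div_eq_inv_mul, ENNReal.mul_inv (by simp) (by simp), ENNReal.div_eq_inv_mul,
          mul_right_comm, mul_assoc (2⁻¹ : ℝ≥0∞), ENNReal.inv_mul_cancel hpi (by simp), mul_one]
      rw [h2] at h
      by_contra hcon
      have h3 : dyadicMaximal f x ≤ ENNReal.ofReal t / 2 + ENNReal.ofReal t / 2 :=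
        h.trans (by gcongr; exact not_lt.1 hcon)
      rw [ENNReal.add_halves] at h3
      exact absurd hx' (not_lt.2 h3)
    have hw := mul_volume_lt_dyadicMaximal_le (S.indicator f) (t := ENNReal.ofReal t / 2)
      (by simpa using ht) (by finiteness)
    have hpow : ENNReal.ofReal (t ^ (q - 1)) =
        ENNReal.ofReal t / 2 * (2 * ENNReal.ofReal (t ^ (q - 2))) := by
      rw [← mul_assoc, ENNReal.div_mul_cancel (by simp) (by simp),
        ← ENNReal.ofReal_mul (le_of_lt ht)]
      congr 1
      rw [← Real.rpow_one_add' (le_of_lt ht) (by linarith)]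
      ring_nf
    calc volume {x | t < (dyadicMaximal f x).toReal} * ENNReal.ofReal (t ^ (q - 1))
        ≤ volume {x | ENNReal.ofReal t / 2 < dyadicMaximal (S.indicator f) x} *
          ENNReal.ofReal (t ^ (q - 1)) := by gcongr
      _ = (ENNReal.ofReal t / 2 *
            volume {x | ENNReal.ofReal t / 2 < dyadicMaximal (S.indicator f) x}) *
            (2 * ENNReal.ofReal (t ^ (q - 2))) := by rw [hpow]; ring
      _ ≤ (25 * NNReal.pi * ∫⁻ y, S.indicator f y) * (2 * ENNReal.ofReal (t ^ (q - 2))) := by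
          gcongr
      _ = 50 * NNReal.pi * ((∫⁻ y, S.indicator f y) * ENNReal.ofReal (t ^ (q - 2))) := by
          rw [show (50 : ℝ≥0∞) = 25 * 2 by norm_num]; ring
      _ = _ := by
          rw [← lintegral_mul_const _ (hf.indicator hSm)]
          congr 2 with y
          by_cases hy : ENNReal.ofReal t < 2 * NNReal.pi * f y
          · rw [Set.indicator_of_mem (by exact hy), Set.indicator_of_mem (by exact hy)]
          · rw [Set.indicator_of_notMem (by exact hy), Set.indicator_of_notMem (by exact hy)]
            simp
  have hjoint : Measurable (Function.uncurry fun (t : ℝ) (y : ℂ) => f y *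
        {t | ENNReal.ofReal t < 2 * NNReal.pi * f y}.indicator
          (fun t => ENNReal.ofReal (t ^ (q - 2))) t) := by
    refine (hf.comp measurable_snd).mul ?_
    have : Measurable ({p : ℝ × ℂ | ENNReal.ofReal p.1 < 2 * NNReal.pi * f p.2}.indicator
        fun p => ENNReal.ofReal (p.1 ^ (q - 2))) := by
      refine Measurable.indicator (by fun_prop) (measurableSet_lt (by fun_prop) (by fun_prop))
    exact this
  calc ∫⁻ x, dyadicMaximal f x ^ q
      = ∫⁻ x, ENNReal.ofReal ((dyadicMaximal f x).toReal ^ q) := by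
        congr 1 with x
        rw [← ENNReal.ofReal_rpow_of_nonneg ENNReal.toReal_nonneg (by linarith),
          ENNReal.ofReal_toReal (hMtop x)]
    _ = ENNReal.ofReal q * ∫⁻ t in Set.Ioi 0, volume {x | t < (dyadicMaximal f x).toReal} *
          ENNReal.ofReal (t ^ (q - 1)) :=
        lintegral_rpow_eq_lintegral_meas_lt_mul _ (.of_forall fun _ => ENNReal.toReal_nonneg)
          (measurable_dyadicMaximal hf).ennreal_toReal.aemeasurable (by linarith)
    _ ≤ ENNReal.ofReal q * ∫⁻ t in Set.Ioi (0 : ℝ), 50 * NNReal.pi * (∫⁻ y, f y *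
        {t | ENNReal.ofReal t < 2 * NNReal.pi * f y}.indicator
          (fun t => ENNReal.ofReal (t ^ (q - 2))) t) := by
        gcongr 1
        exact setLIntegral_mono' measurableSet_Ioi hweak
    _ = ENNReal.ofReal q * (50 * NNReal.pi * ∫⁻ y, f y *
          ∫⁻ t in Set.Ioi (0 : ℝ), {t | ENNReal.ofReal t < 2 * NNReal.pi * f y}.indicator
          (fun t => ENNReal.ofReal (t ^ (q - 2))) t) := by
        rw [lintegral_const_mul _ hjoint.lintegral_prod_right,
          lintegral_lintegral_swap hjoint.aemeasurable]
        congr 3 with y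
        refine lintegral_const_mul _ (Measurable.indicator (by fun_prop)
          (measurableSet_lt (by fun_prop) (by fun_prop)))
    _ = ENNReal.ofReal q * (50 * NNReal.pi * ∫⁻ y, ENNReal.ofReal (q - 2 + 1)⁻¹ *
          (2 * NNReal.pi) ^ (q - 1) * f y ^ q) := by
        congr 3 with y
        have hfy : f y ≠ ⊤ := ne_top_of_le_ne_top hB (hfB y)
        rw [lintegral_Ioi_indicator_rpow (by finiteness) (by linarith),
          show q - 2 + 1 = q - 1 by ring, ENNReal.mul_rpow_of_nonneg _ _ (by linarith),
          show f y ^ q = f y * f y ^ (q - 1) by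
            conv_lhs => rw [show q = 1 + (q - 1) by ring,
              ENNReal.rpow_add_of_nonneg _ _ zero_le_one (by linarith), ENNReal.rpow_one]]
        ring
    _ = _ := by
        rw [lintegral_const_mul _ (hf.pow_const q)]
        ring

/-- The layer-cake representation of the potential with kernel `‖x - y‖⁻¹`. -/
lemma lintegral_mul_enorm_sub_inv {f : ℂ → ℝ≥0∞} (hf : Measurable f) (x : ℂ) :
    ∫⁻ y, f y * ‖x - y‖ₑ⁻¹ =
      ∫⁻ r in Set.Ioi (0 : ℝ), ENNReal.ofReal (r ^ (-2 : ℝ)) *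
        ∫⁻ y in Metric.closedBall x r, f y := by
  have hk : ∀ d : ℝ, 0 < d → ∫⁻ r in Set.Ioi (0 : ℝ), {r | d ≤ r}.indicator
      (fun r => ENNReal.ofReal (r ^ (-2 : ℝ))) r = ENNReal.ofReal d⁻¹ := by
    intro d hd
    have hset : {r : ℝ | d ≤ r} ∩ Set.Ioi 0 = Set.Ici d :=
      Set.inter_eq_left.2 fun r hr => lt_of_lt_of_le hd hr
    have hm : MeasurableSet {r : ℝ | d ≤ r} := measurableSet_Ici
    rw [lintegral_indicator hm, Measure.restrict_restrict hm, hset,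
      setLIntegral_congr Ioi_ae_eq_Ici.symm, ← ofReal_integral_eq_lintegral_ofReal,
      integral_Ioi_rpow_of_lt (by norm_num) hd]
    · norm_num [Real.rpow_neg_one]
    · exact integrableOn_Ioi_rpow_of_lt (by norm_num) hd
    · refine (ae_restrict_iff' measurableSet_Ioi).2 (.of_forall fun t ht => ?_)
      exact Real.rpow_nonneg (hd.trans ht).le _
  have hjoint : Measurable (Function.uncurry fun (r : ℝ) (y : ℂ) => f y *
      {r | dist y x ≤ r}.indicator (fun r => ENNReal.ofReal (r ^ (-2 : ℝ))) r) := by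
    refine (hf.comp measurable_snd).mul ?_
    have : Measurable ({p : ℝ × ℂ | dist p.2 x ≤ p.1}.indicator
        fun p => ENNReal.ofReal (p.1 ^ (-2 : ℝ))) := by
      refine Measurable.indicator (by fun_prop) (measurableSet_le (by fun_prop) (by fun_prop))
    exact this
  calc ∫⁻ y, f y * ‖x - y‖ₑ⁻¹
      = ∫⁻ y, f y * ∫⁻ r in Set.Ioi (0 : ℝ), {r | dist y x ≤ r}.indicator
          (fun r => ENNReal.ofReal (r ^ (-2 : ℝ))) r := by
        refine lintegral_congr_ae ?_
        have hne : ∀ᵐ y : ℂ, y ≠ x := by simp [ae_iff]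
        filter_upwards [hne] with y hy
        rw [hk _ (dist_pos.2 hy), dist_comm, dist_eq_norm,
          ENNReal.ofReal_inv_of_pos (norm_pos_iff.2 (sub_ne_zero.2 hy.symm)), ofReal_norm]
    _ = ∫⁻ y, ∫⁻ r in Set.Ioi (0 : ℝ), f y * {r | dist y x ≤ r}.indicator
          (fun r => ENNReal.ofReal (r ^ (-2 : ℝ))) r := by
        congr 1 with y
        refine (lintegral_const_mul _ (Measurable.indicator (by fun_prop) measurableSet_Ici)).symm
    _ = _ := by
        rw [← lintegral_lintegral_swap hjoint.aemeasurable]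
        congr 1 with r
        rw [← lintegral_const_mul _ hf, ← lintegral_indicator Metric.isClosed_closedBall.measurableSet]
        congr 1 with y
        by_cases hy : dist y x ≤ r
        · rw [Set.indicator_of_mem (by exact hy), Set.indicator_of_mem (by exact hy), mul_comm]
        · rw [Set.indicator_of_notMem (by exact hy), Set.indicator_of_notMem (by exact hy), mul_zero]

lemma lintegral_closedBall_le_rpow {p : ℝ} (hp : 2 < p) {f : ℂ → ℝ≥0∞} (hf : Measurable f) (x : ℂ)
    {r : ℝ} (hr : 0 < r) :
    ∫⁻ y in Metric.closedBall x r, f y ≤ (∫⁻ y, f y ^ (2 * p / (p + 2))) ^ ((p + 2) / (2 * p)) *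
      (NNReal.pi ^ ((p - 2) / (2 * p)) * ENNReal.ofReal (r ^ ((p - 2) / p))) := by
  have hpq : (2 * p / (p + 2)).HolderConjugate (2 * p / (p - 2)) := by
    rw [Real.holderConjugate_iff]
    constructor
    · rw [lt_div_iff₀ (by linarith)]; linarith
    · field_simp; ring
  have h := ENNReal.lintegral_mul_le_Lp_mul_Lq (volume.restrict (Metric.closedBall x r)) hpq
    hf.aemeasurable (g := 1) aemeasurable_one
  simp only [mul_one, Pi.one_apply, ENNReal.one_rpow, lintegral_one, Measure.restrict_apply_univ,
    Complex.volume_closedBall, one_div_div] at h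
  refine h.trans ?_
  gcongr
  · exact Measure.restrict_le_self
  · rw [ENNReal.mul_rpow_of_nonneg _ _ (by apply div_nonneg <;> linarith), mul_comm,
      ← ENNReal.ofReal_pow hr.le, ENNReal.ofReal_rpow_of_nonneg (by positivity)
      (by apply div_nonneg <;> linarith), ← Real.rpow_natCast, ← Real.rpow_mul hr.le,
      show ((2 : ℕ) : ℝ) * ((p - 2) / (2 * p)) = (p - 2) / p by push_cast; field_simp]

lemma lintegral_mul_enorm_sub_inv_le_add {p : ℝ} (hp : 2 < p) {f : ℂ → ℝ≥0∞} (hf : Measurable f)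
    (x : ℂ) {R : ℝ} (hR : 0 < R) :
    ∫⁻ y, f y * ‖x - y‖ₑ⁻¹ ≤ 4 * dyadicMaximal f x * ENNReal.ofReal R +
      NNReal.pi ^ ((p - 2) / (2 * p)) * ENNReal.ofReal (p / 2) *
        (∫⁻ y, f y ^ (2 * p / (p + 2))) ^ ((p + 2) / (2 * p)) * ENNReal.ofReal (R ^ (-2 / p)) := by
  rw [lintegral_mul_enorm_sub_inv hf, ← Set.Ioc_union_Ioi_eq_Ioi hR.le,
    lintegral_union measurableSet_Ioi (Set.Ioc_disjoint_Ioi le_rfl)]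
  gcongr
  · calc _ ≤ ∫⁻ r in Set.Ioc 0 R, 4 * dyadicMaximal f x := by
          refine setLIntegral_mono' measurableSet_Ioc fun r hr => ?_
          calc _ ≤ ENNReal.ofReal (r ^ (-2 : ℝ)) *
                (4 * ENNReal.ofReal r ^ 2 * dyadicMaximal f x) := by
                gcongr
                exact lintegral_closedBall_le_dyadicMaximal f x hr.1
            _ = ENNReal.ofReal (r ^ (-2 : ℝ)) * ENNReal.ofReal r ^ 2 *
                (4 * dyadicMaximal f x) := by ring
            _ = 4 * dyadicMaximal f x := by
                rw [← ENNReal.ofReal_pow hr.1.le, ← ENNReal.ofReal_mul (Real.rpow_nonneg hr.1.le _),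
                  ← Real.rpow_natCast, ← Real.rpow_add hr.1]
                norm_num
      _ = _ := by simp
  · set N := (∫⁻ y, f y ^ (2 * p / (p + 2))) ^ ((p + 2) / (2 * p))
    have hexp : -1 - 2 / p < -1 := by
      have : 0 < 2 / p := by positivity
      linarith
    calc _ ≤ ∫⁻ r in Set.Ioi R, N * NNReal.pi ^ ((p - 2) / (2 * p)) *
              ENNReal.ofReal (r ^ (-1 - 2 / p)) := by
          refine setLIntegral_mono' measurableSet_Ioi fun r hr => ?_
          have hr0 : 0 < r := hR.trans hr
          calc _ ≤ ENNReal.ofReal (r ^ (-2 : ℝ)) * (N * (NNReal.pi ^ ((p - 2) / (2 * p)) *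
                ENNReal.ofReal (r ^ ((p - 2) / p)))) := by
                gcongr
                exact lintegral_closedBall_le_rpow hp hf x hr0
            _ = N * NNReal.pi ^ ((p - 2) / (2 * p)) *
                (ENNReal.ofReal (r ^ (-2 : ℝ)) * ENNReal.ofReal (r ^ ((p - 2) / p))) := by ring
            _ = _ := by
                rw [← ENNReal.ofReal_mul (Real.rpow_nonneg hr0.le _), ← Real.rpow_add hr0]
                congr 3
                field_simp
                ring
      _ = _ := by
          rw [lintegral_const_mul _ (by fun_prop), ← ofReal_integral_eq_lintegral_ofReal,
            integral_Ioi_rpow_of_lt hexp hR]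
          · rw [show -R ^ (-1 - 2 / p + 1) / (-1 - 2 / p + 1) = p / 2 * R ^ (-2 / p) by
              rw [show -1 - 2 / p + 1 = -2 / p by ring]
              field_simp, ENNReal.ofReal_mul (by positivity)]
            ring
          · exact integrableOn_Ioi_rpow_of_lt hexp hR
          · refine (ae_restrict_iff' measurableSet_Ioi).2 (.of_forall fun t ht => ?_)
            exact Real.rpow_nonneg (hR.trans ht).le _

/-- Hedberg's inequality. -/
lemma lintegral_mul_enorm_sub_inv_le_mul {p : ℝ} (hp : 2 < p) {f : ℂ → ℝ≥0∞} (hf : Measurable f)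
    (x : ℂ) :
    ∫⁻ y, f y * ‖x - y‖ₑ⁻¹ ≤ (4 + NNReal.pi ^ ((p - 2) / (2 * p)) * ENNReal.ofReal (p / 2)) *
      (((∫⁻ y, f y ^ (2 * p / (p + 2))) ^ ((p + 2) / (2 * p))) ^ (p / (p + 2)) *
        dyadicMaximal f x ^ (2 / (p + 2))) := by
  have hsplit := fun R hR => lintegral_mul_enorm_sub_inv_le_add hp hf x (R := R) hR
  have hball := fun r hr => lintegral_closedBall_le_rpow hp hf x (r := r) hr
  set N := (∫⁻ y, f y ^ (2 * p / (p + 2))) ^ ((p + 2) / (2 * p))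
  have hball' := fun r hr => lintegral_closedBall_le_dyadicMaximal f x (r := r) hr
  set M := dyadicMaximal f x
  have hzero : N = 0 ∨ M = 0 → ∫⁻ y, f y * ‖x - y‖ₑ⁻¹ = 0 := by
    intro h
    rw [lintegral_mul_enorm_sub_inv hf, setLIntegral_congr_fun (g := fun _ => 0) measurableSet_Ioi,
      lintegral_zero]
    intro r hr
    have : ∫⁻ y in Metric.closedBall x r, f y = 0 := by
      rcases h with h | h
      · simpa [h] using hball r hr
      · simpa [h] using hball' r hr
    simp [this]
  have ha : 0 < p / (p + 2) := by positivity
  have hb : 0 < 2 / (p + 2) := by positivity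
  have hc : (4 + NNReal.pi ^ ((p - 2) / (2 * p)) * ENNReal.ofReal (p / 2) : ℝ≥0∞) ≠ 0 := by simp
  rcases eq_or_ne N 0 with hN | hN
  · rw [hzero (.inl hN)]; exact zero_le
  rcases eq_or_ne M 0 with hM | hM
  · rw [hzero (.inr hM)]; exact zero_le
  rcases eq_or_ne N ⊤ with hN' | hN'
  · rw [hN', ENNReal.top_rpow_of_pos ha, ENNReal.top_mul, ENNReal.mul_top hc]
    · exact le_top
    · simp [ENNReal.rpow_eq_zero_iff, hM, hb.not_gt]
  rcases eq_or_ne M ⊤ with hM' | hM'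
  · rw [hM', ENNReal.top_rpow_of_pos hb, ENNReal.mul_top, ENNReal.mul_top hc]
    · exact le_top
    · simp [ENNReal.rpow_eq_zero_iff, hN, ha.not_gt]
  obtain ⟨n, hn, hNn⟩ : ∃ n : ℝ, 0 < n ∧ N = ENNReal.ofReal n :=
    ⟨N.toReal, ENNReal.toReal_pos hN hN', (ENNReal.ofReal_toReal hN').symm⟩
  obtain ⟨m, hm, hMm⟩ : ∃ m : ℝ, 0 < m ∧ M = ENNReal.ofReal m :=
    ⟨M.toReal, ENNReal.toReal_pos hM hM', (ENNReal.ofReal_toReal hM').symm⟩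
  have hR : 0 < (n / m) ^ (p / (p + 2)) := by positivity
  have h1 : m * (n / m) ^ (p / (p + 2)) = n ^ (p / (p + 2)) * m ^ (2 / (p + 2)) := by
    rw [Real.div_rpow hn.le hm.le, show 2 / (p + 2) = 1 - p / (p + 2) by field_simp; ring,
      Real.rpow_sub hm, Real.rpow_one]
    ring
  have h2 : n * ((n / m) ^ (p / (p + 2))) ^ (-2 / p) = n ^ (p / (p + 2)) * m ^ (2 / (p + 2)) := by
    rw [← Real.rpow_mul (by positivity), show p / (p + 2) * (-2 / p) = -(2 / (p + 2)) by field_simp,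
      Real.rpow_neg (by positivity), Real.div_rpow hn.le hm.le,
      show p / (p + 2) = 1 - 2 / (p + 2) by field_simp; ring, Real.rpow_sub hn, Real.rpow_one]
    field_simp
  refine (hsplit _ hR).trans (le_of_eq ?_)
  rw [hNn, hMm, ENNReal.ofReal_rpow_of_pos hn, ENNReal.ofReal_rpow_of_pos hm,
    ← ENNReal.ofReal_mul (by positivity), add_mul]
  congr 1
  · rw [mul_assoc, ← ENNReal.ofReal_mul hm.le, h1]
  · rw [mul_assoc, ← ENNReal.ofReal_mul hn.le, h2]

/-- The Hardy–Littlewood–Sobolev inequality for the kernel `‖x - y‖⁻¹` on `ℂ`. -/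
lemma exists_lintegral_rpow_potential_le {p : ℝ} (hp : 2 < p) :
    ∃ C : ℝ≥0∞, C ≠ ⊤ ∧ ∀ f : ℂ → ℝ≥0∞, Measurable f → ∀ B : ℝ≥0∞, B ≠ ⊤ → (∀ x, f x ≤ B) →
      (∫⁻ x, (∫⁻ y, f y * ‖x - y‖ₑ⁻¹) ^ p) ^ (1 / p) ≤
        C * (∫⁻ x, f x ^ (2 * p / (p + 2))) ^ (1 / (2 * p / (p + 2))) := by
  have hq : 1 < 2 * p / (p + 2) := by rw [lt_div_iff₀ (by linarith)]; linarith
  obtain ⟨C, hC, hmax⟩ := exists_lintegral_dyadicMaximal_rpow_le hq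
  set K : ℝ≥0∞ := 4 + NNReal.pi ^ ((p - 2) / (2 * p)) * ENNReal.ofReal (p / 2) with hKdef
  have hK : K ≠ ⊤ := by
    have : (NNReal.pi : ℝ≥0∞) ^ ((p - 2) / (2 * p)) ≠ ⊤ :=
      ENNReal.rpow_ne_top_of_nonneg (by apply div_nonneg <;> linarith) (by finiteness)
    finiteness
  have hp0 : 0 < p := by linarith
  refine ⟨K * C ^ (1 / p), ENNReal.mul_ne_top hK
    (ENNReal.rpow_ne_top_of_nonneg (by positivity) hC), fun f hf B hB hfB => ?_⟩
  set I := ∫⁻ x, f x ^ (2 * p / (p + 2)) with hI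
  have hpt : ∀ x, (∫⁻ y, f y * ‖x - y‖ₑ⁻¹) ^ p ≤
      K ^ p * I ^ (p / 2) * dyadicMaximal f x ^ (2 * p / (p + 2)) := by
    intro x
    refine (ENNReal.rpow_le_rpow (lintegral_mul_enorm_sub_inv_le_mul hp hf x) hp0.le).trans_eq ?_
    rw [ENNReal.mul_rpow_of_nonneg _ _ hp0.le, ENNReal.mul_rpow_of_nonneg _ _ hp0.le,
      ← ENNReal.rpow_mul, ← ENNReal.rpow_mul, ← ENNReal.rpow_mul, ← mul_assoc,
      show (p + 2) / (2 * p) * (p / (p + 2) * p) = p / 2 by field_simp,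
      show 2 / (p + 2) * p = 2 * p / (p + 2) by ring]
  calc (∫⁻ x, (∫⁻ y, f y * ‖x - y‖ₑ⁻¹) ^ p) ^ (1 / p)
      ≤ (K ^ p * I ^ (p / 2) * (C * I)) ^ (1 / p) := by
        gcongr
        refine (lintegral_mono hpt).trans ?_
        rw [lintegral_const_mul _ ((measurable_dyadicMaximal hf).pow_const _)]
        gcongr
        exact hmax f hf B hB hfB
    _ = (K ^ p * C * I ^ (p / 2 + 1)) ^ (1 / p) := by
        rw [ENNReal.rpow_add_of_nonneg _ _ (by positivity) zero_le_one, ENNReal.rpow_one]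
        ring_nf
    _ = _ := by
        rw [ENNReal.mul_rpow_of_nonneg _ _ (by positivity),
          ENNReal.mul_rpow_of_nonneg _ _ (by positivity), ← ENNReal.rpow_mul, ← ENNReal.rpow_mul,
          mul_one_div_cancel hp0.ne', ENNReal.rpow_one]
        congr 2
        field_simp

lemma integrableOn_polarCoord_target_of_norm_le {A : ℝ × ℝ → ℂ} (hA : Continuous A) {C : ℝ}
    (hC : ∀ p ∈ polarCoord.target, ‖A p‖ ≤ C * (1 + p.1 ^ 2)⁻¹) :
    IntegrableOn A polarCoord.target := by
  have hg : IntegrableOn (fun p : ℝ × ℝ => C * (1 + p.1 ^ 2)⁻¹ * 1) polarCoord.target := by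
    rw [IntegrableOn, polarCoord_target, Measure.volume_eq_prod, ← Measure.prod_restrict]
    exact (integrable_inv_one_add_sq.const_mul C).integrableOn.mul_prod (integrable_const (1 : ℝ))
  refine hg.mono' hA.aestronglyMeasurable ?_
  refine (ae_restrict_iff' polarCoord.open_target.measurableSet).2 (.of_forall fun p hp => ?_)
  simpa using hC p hp

lemma hasDerivAt_cos_add_sin_mul_I (θ : ℝ) :
    HasDerivAt (fun θ : ℝ => (Real.cos θ + Real.sin θ * I : ℂ))
      (I * (Real.cos θ + Real.sin θ * I)) θ := by
  have h1 := (Real.hasDerivAt_cos θ).ofReal_comp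
  have h2 := ((Real.hasDerivAt_sin θ).ofReal_comp).mul_const I
  refine (h1.add h2).congr_deriv ?_
  push_cast
  linear_combination -(Complex.sin θ) * I_mul_I

lemma norm_cos_add_sin_mul_I (θ : ℝ) : ‖(Real.cos θ + Real.sin θ * I : ℂ)‖ = 1 := by
  rw [ofReal_cos, ofReal_sin, Complex.cos_add_sin_I, Complex.norm_exp_ofReal_mul_I θ]

/-- The polar form of `∂̄`: dividing by a unit vector `u` gives the derivatives along `u`, `I * u`. -/
lemma dbar_div_eq (F : ℂ → ℂ) (z : ℂ) {u : ℂ} (hu : ‖u‖ = 1) :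
    dbar F z / u = (fderiv ℝ F z u + I * fderiv ℝ F z (I * u)) / 2 := by
  have hu0 : u ≠ 0 := by rintro rfl; simp at hu
  have hlin : ∀ a b : ℝ, fderiv ℝ F z (a + b * I) = a * fderiv ℝ F z 1 + b * fderiv ℝ F z I := by
    intro a b
    have : (a + b * I : ℂ) = a • (1 : ℂ) + b • I := by simp
    rw [this, map_add, map_smul, map_smul, real_smul, real_smul]
  have h1 : fderiv ℝ F z u = u.re * fderiv ℝ F z 1 + u.im * fderiv ℝ F z I := by
    rw [← hlin, re_add_im]
  have h2 : fderiv ℝ F z (I * u) = -u.im * fderiv ℝ F z 1 + u.re * fderiv ℝ F z I := by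
    have h := hlin (-u.im) u.re
    push_cast at h
    rw [← h]
    congr 1
    conv_lhs => rw [← re_add_im u]
    linear_combination (u.im : ℂ) * I_mul_I
  have hmul : (u.re + u.im * I : ℂ) * (u.re - u.im * I) = 1 := by
    have h := Complex.mul_conj u
    rw [normSq_eq_norm_sq, hu] at h
    have hc : conj u = u.re - u.im * I := by
      apply Complex.ext <;> simp
    rw [hc] at h
    rw [re_add_im, h]
    norm_num
  rw [div_eq_iff hu0, h1, h2, dbar]
  conv_rhs => rw [← re_add_im u]
  simp only [add_re, ofReal_re, mul_re, I_re, mul_zero, ofReal_im, I_im, mul_one, sub_self,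
    add_zero, add_im, mul_im, zero_add]
  linear_combination (-(fderiv ℝ F z 1 + I * fderiv ℝ F z I) / 2) * hmul +
    (-(u.re + u.im * I) * u.im * (fderiv ℝ F z I) / 2) * I_mul_I

/-- The Cauchy–Pompeiu formula at the origin. -/
lemma integral_dbar_div {F : ℂ → ℂ} (hF : ContDiff ℝ 1 F) (h0 : Tendsto F (cocompact ℂ) (𝓝 0))
    {C : ℝ} (hC : ∀ w, (1 + ‖w‖ ^ 2) * ‖fderiv ℝ F w‖ ≤ C) :
    ∫ w, dbar F w / w = -(Real.pi * F 0) := by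
  set u : ℝ → ℂ := fun θ => Real.cos θ + Real.sin θ * I with hu
  have hucont : Continuous u := by fun_prop
  have hunorm : ∀ θ, ‖u θ‖ = 1 := norm_cos_add_sin_mul_I
  have hDF : Continuous (fderiv ℝ F) := hF.continuous_fderiv one_ne_zero
  have hd : ∀ w, HasFDerivAt F (fderiv ℝ F w) w := fun w =>
    (hF.differentiable one_ne_zero w).hasFDerivAt
  set A : ℝ × ℝ → ℂ := fun p => fderiv ℝ F (p.1 * u p.2) (u p.2) with hA
  set B : ℝ × ℝ → ℂ := fun p => fderiv ℝ F (p.1 * u p.2) (I * u p.2) with hB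
  have hbound : ∀ (p : ℝ × ℝ) (v : ℂ), ‖v‖ = 1 →
      ‖fderiv ℝ F (p.1 * u p.2) v‖ ≤ C * (1 + p.1 ^ 2)⁻¹ := by
    intro p v hv
    have h := hC (p.1 * u p.2)
    rw [norm_mul, hunorm, mul_one, norm_real, Real.norm_eq_abs, sq_abs, mul_comm,
      ← le_div_iff₀ (by positivity), div_eq_mul_inv] at h
    refine le_trans ?_ h
    simpa [hv] using (fderiv ℝ F (p.1 * u p.2)).le_opNorm v
  have hAc : Continuous A := by
    refine Continuous.clm_apply (hDF.comp ?_) (by fun_prop)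
    fun_prop
  have hBc : Continuous B := by
    refine Continuous.clm_apply (hDF.comp ?_) (by fun_prop)
    fun_prop
  have hAi : IntegrableOn A polarCoord.target :=
    integrableOn_polarCoord_target_of_norm_le hAc fun p _ => hbound p _ (hunorm _)
  have hBi : IntegrableOn B polarCoord.target :=
    integrableOn_polarCoord_target_of_norm_le hBc fun p _ => hbound p _ (by simp [hunorm])
  have hpolar : ∫ w, dbar F w / w = ∫ p in polarCoord.target, (1 / 2 : ℂ) * (A p + I * B p) := by
    rw [← Complex.integral_comp_polarCoord_symm]
    refine setIntegral_congr_fun polarCoord.open_target.measurableSet fun p hp => ?_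
    have hp0 : (p.1 : ℂ) ≠ 0 := ofReal_ne_zero.2 (ne_of_gt hp.1)
    have h := dbar_div_eq F (p.1 * u p.2) (hunorm p.2)
    simp only [Complex.polarCoord_symm_apply, real_smul]
    change (p.1 : ℂ) * (dbar F (p.1 * u p.2) / (p.1 * u p.2)) = _
    rw [← mul_div_assoc, mul_div_mul_left _ _ hp0, h]
    ring
  have hAint : ∫ p in polarCoord.target, A p = -(2 * Real.pi * F 0) := by
    have hray : ∀ θ, ∫ r in Set.Ioi (0 : ℝ), A (r, θ) = -F 0 := by
      intro θ
      have hder : ∀ r ∈ Set.Ici (0 : ℝ), HasDerivAt (fun r : ℝ => F (r * u θ)) (A (r, θ)) r := by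
        intro r _
        have h1 : HasDerivAt (fun r : ℝ => (r * u θ : ℂ)) (u θ) r := by
          simpa using (ofRealCLM.hasDerivAt (x := r)).mul_const (u θ)
        exact (hd _).comp_hasDerivAt r h1
      have hlim : Tendsto (fun r : ℝ => F (r * u θ)) atTop (𝓝 0) := by
        refine h0.comp ?_
        rw [← Metric.cobounded_eq_cocompact, ← tendsto_norm_atTop_iff_cobounded]
        refine tendsto_abs_atTop_atTop.congr fun r => ?_
        rw [norm_mul, hunorm, mul_one, norm_real, Real.norm_eq_abs]
      have h_integ : IntegrableOn (fun r => A (r, θ)) (Set.Ioi 0) := by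
        refine ((integrable_inv_one_add_sq.const_mul C).mono' ?_ ?_).integrableOn
        · exact (hAc.comp (by fun_prop)).aestronglyMeasurable
        · exact .of_forall fun r => hbound (r, θ) _ (hunorm _)
      rw [integral_Ioi_of_hasDerivAt_of_tendsto' hder h_integ hlim]
      simp
    rw [polarCoord_target] at hAi ⊢
    rw [IntegrableOn, Measure.volume_eq_prod, ← Measure.prod_restrict] at hAi
    rw [Measure.volume_eq_prod, ← Measure.prod_restrict, integral_prod_symm _ hAi]
    simp only [hray, integral_const, MeasurableSet.univ, measureReal_restrict_apply,
      Set.univ_inter, Real.volume_real_Ioo, real_smul]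
    rw [max_eq_left (by linarith [Real.pi_pos])]
    push_cast
    ring
  have hBint : ∫ p in polarCoord.target, B p = 0 := by
    have hcirc : ∀ r ∈ Set.Ioi (0 : ℝ), ∫ θ in Set.Ioo (-Real.pi) Real.pi, B (r, θ) = 0 := by
      intro r hr
      have hder : ∀ θ ∈ Set.uIcc (-Real.pi) Real.pi,
          HasDerivAt (fun θ : ℝ => F (r * u θ)) (r * B (r, θ)) θ := by
        intro θ _
        have h1 : HasDerivAt (fun θ : ℝ => (r * u θ : ℂ)) (r • (I * u θ)) θ := by
          rw [real_smul]
          exact (hasDerivAt_cos_add_sin_mul_I θ).const_mul (r : ℂ)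
        refine ((hd _).comp_hasDerivAt θ h1).congr_deriv ?_
        rw [map_smul, real_smul]
      have h := intervalIntegral.integral_eq_sub_of_hasDerivAt hder
        (Continuous.intervalIntegrable (by fun_prop) _ _)
      have hper : u Real.pi = u (-Real.pi) := by simp [hu]
      rw [hper, sub_self, intervalIntegral.integral_const_mul] at h
      rw [← integral_Ioc_eq_integral_Ioo, ← intervalIntegral.integral_of_le
        (by linarith [Real.pi_pos])]
      exact (mul_eq_zero.1 h).resolve_left (ofReal_ne_zero.2 (ne_of_gt hr))
    rw [polarCoord_target] at hBi ⊢
    rw [Measure.volume_eq_prod] at hBi ⊢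
    rw [setIntegral_prod _ hBi, setIntegral_congr_fun measurableSet_Ioi hcirc]
    simp
  rw [hpolar, integral_const_mul, integral_add hAi (hBi.const_mul I), integral_const_mul, hAint,
    hBint]
  ring

/-- The Cauchy–Pompeiu formula for decaying functions on the plane. -/
lemma integral_dbar_div_sub {F : ℂ → ℂ} (hF : ContDiff ℝ 1 F)
    (h0 : Tendsto F (cocompact ℂ) (𝓝 0)) {C : ℝ}
    (hC : ∀ w, (1 + ‖w‖ ^ 2) * ‖fderiv ℝ F w‖ ≤ C) (z : ℂ) :
    ∫ w, dbar F w / (z - w) = Real.pi * F z := by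
  have hdbar : ∀ w, dbar (fun w => F (z + w)) w = dbar F (z + w) := fun w => by
    simp only [dbar, fderiv_comp_add_left]
  have h := integral_dbar_div (F := fun w => F (z + w)) (C := (2 + 2 * ‖z‖ ^ 2) * C)
    (hF.comp (contDiff_const.add contDiff_id))
    (h0.comp (Homeomorph.addLeft z).isClosedEmbedding.tendsto_cocompact) (fun w => by
      rw [fderiv_comp_add_left]
      have hw : 1 + ‖w‖ ^ 2 ≤ (2 + 2 * ‖z‖ ^ 2) * (1 + ‖z + w‖ ^ 2) := by
        have h1 : ‖w‖ ≤ ‖z + w‖ + ‖z‖ := by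
          calc ‖w‖ = ‖(z + w) - z‖ := by rw [add_sub_cancel_left]
            _ ≤ _ := norm_sub_le _ _
        nlinarith [norm_nonneg w, norm_nonneg z, norm_nonneg (z + w),
          sq_nonneg (‖z + w‖ - ‖z‖), mul_nonneg (sq_nonneg ‖z‖) (sq_nonneg ‖z + w‖)]
      calc (1 + ‖w‖ ^ 2) * ‖fderiv ℝ F (z + w)‖
          ≤ (2 + 2 * ‖z‖ ^ 2) * (1 + ‖z + w‖ ^ 2) * ‖fderiv ℝ F (z + w)‖ := by gcongr
        _ = (2 + 2 * ‖z‖ ^ 2) * ((1 + ‖z + w‖ ^ 2) * ‖fderiv ℝ F (z + w)‖) := by ring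
        _ ≤ _ := by gcongr; exact hC _)
  simp only [hdbar, add_zero] at h
  rw [← integral_add_left_eq_self _ z]
  simp only [sub_add_cancel_left, div_neg, integral_neg, h, neg_neg]

lemma norm_ek (k z : ℂ) : ‖ek k z‖ = 1 := by
  have h : I * (conj k * z + k * conj z) / 2 = ((k.re * z.re + k.im * z.im : ℝ) : ℂ) * I := by
    apply Complex.ext
    · simp
      ring
    · simp
  rw [ek, h, Complex.norm_exp_ofReal_mul_I]

lemma hasFDerivAt_ek (k z : ℂ) : HasFDerivAt (ek k)
    (ek k z • ((I / 2) • (conj k • ContinuousLinearMap.id ℝ ℂ + k • (conjCLE : ℂ →L[ℝ] ℂ)))) z := by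
  have h1 : HasFDerivAt (fun z : ℂ => I * (conj k * z + k * conj z) / 2)
      ((I / 2) • (conj k • ContinuousLinearMap.id ℝ ℂ + k • (conjCLE : ℂ →L[ℝ] ℂ))) z := by
    have h := (((hasFDerivAt_id (𝕜 := ℝ) z).const_smul (conj k)).add
      ((conjCLE.hasFDerivAt (x := z)).const_smul k)).const_smul (I / 2)
    refine h.congr_of_eventuallyEq (.of_forall fun w => ?_)
    simp
    ring
  exact h1.cexp

lemma contDiff_ek (k : ℂ) : ContDiff ℝ 1 (ek k) := by
  have h : ContDiff ℝ 1 fun z : ℂ => conj z := conjCLE.contDiff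
  unfold ek
  exact ((contDiff_const.mul ((contDiff_const.mul contDiff_id).add
    (contDiff_const.mul h))).div_const 2).cexp

lemma norm_fderiv_ek_le (k z : ℂ) : ‖fderiv ℝ (ek k) z‖ ≤ ‖k‖ := by
  refine ContinuousLinearMap.opNorm_le_bound _ (norm_nonneg _) fun v => ?_
  rw [(hasFDerivAt_ek k z).fderiv]
  simp only [smul_apply, add_apply, norm_smul, norm_ek,
    one_mul]
  have h : ‖conj k • (ContinuousLinearMap.id ℝ ℂ) v + k • (conjCLE : ℂ →L[ℝ] ℂ) v‖ ≤
      2 * (‖k‖ * ‖v‖) := by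
    refine (norm_add_le _ _).trans_eq ?_
    simp
    ring
  calc _ ≤ ‖I / 2‖ * (2 * (‖k‖ * ‖v‖)) := by gcongr
    _ = _ := by simp

lemma dbar_ek_mul (k : ℂ) {G : ℂ → ℂ} {z : ℂ} (hG : DifferentiableAt ℝ G z) :
    dbar (fun z => ek k z * G z) z = I * k / 2 * (ek k z * G z) + ek k z * dbar G z := by
  rw [dbar, fderiv_fun_mul (hasFDerivAt_ek k z).differentiableAt hG, (hasFDerivAt_ek k z).fderiv,
    dbar]
  simp
  linear_combination (ek k z * G z * (I / 4) * (conj k - k)) * I_mul_I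

lemma norm_dbar_le (G : ℂ → ℂ) (z : ℂ) : ‖dbar G z‖ ≤ ‖fderiv ℝ G z‖ := by
  have h1 := (fderiv ℝ G z).le_opNorm 1
  have h2 := (fderiv ℝ G z).le_opNorm I
  simp only [norm_one, norm_I, mul_one] at h1 h2
  rw [dbar, norm_div, Complex.norm_ofNat, div_le_iff₀ two_pos]
  refine (norm_add_le _ _).trans ?_
  rw [norm_mul, norm_I, one_mul]
  linarith

lemma SchwartzMap.exists_one_add_norm_sq_mul_le (G : 𝓢(ℂ, ℂ)) :
    ∃ C, ∀ w, (1 + ‖w‖ ^ 2) * ‖G w‖ ≤ C ∧ (1 + ‖w‖ ^ 2) * ‖fderiv ℝ G w‖ ≤ C := by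
  obtain ⟨C₁, -, h₁⟩ := G.decay 0 0
  obtain ⟨C₂, -, h₂⟩ := G.decay 2 0
  obtain ⟨C₃, -, h₃⟩ := G.decay 0 1
  obtain ⟨C₄, -, h₄⟩ := G.decay 2 1
  simp only [norm_iteratedFDeriv_zero, norm_iteratedFDeriv_one, pow_zero, one_mul] at h₁ h₂ h₃ h₄
  refine ⟨max (C₁ + C₂) (C₃ + C₄), fun w => ⟨le_max_of_le_left ?_, le_max_of_le_right ?_⟩⟩
  · linarith [h₁ w, h₂ w]
  · linarith [h₃ w, h₄ w]

/-- Integration by parts: the oscillating factor gains `‖k‖⁻¹` at the cost of one derivative. -/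
lemma enorm_dbarInv_ek_mul_le (G : 𝓢(ℂ, ℂ)) {k : ℂ} (hk : k ≠ 0) (z : ℂ) :
    ‖dbarInv (fun z => ek k z * G z) z‖ₑ ≤
      ENNReal.ofReal (4 / Real.pi * ‖k‖⁻¹) * ∫⁻ w, ‖fderiv ℝ G w‖ₑ * ‖z - w‖ₑ⁻¹ := by
  set T := ∫⁻ w, ‖fderiv ℝ G w‖ₑ * ‖z - w‖ₑ⁻¹ with hTdef
  have hk0 : 0 < ‖k‖ := norm_pos_iff.2 hk
  have hcoef : ENNReal.ofReal (4 / Real.pi * ‖k‖⁻¹) ≠ 0 :=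
    (ENNReal.ofReal_pos.2 (by positivity)).ne'
  rcases eq_or_ne T ⊤ with hT | hT
  · rw [hT, ENNReal.mul_top hcoef]; exact le_top
  by_cases h_integ : Integrable fun w => ek k w * G w / (z - w)
  swap
  · rw [dbarInv, integral_undef h_integ]; simp
  obtain ⟨C, hC⟩ := G.exists_one_add_norm_sq_mul_le
  have hG1 : ContDiff ℝ 1 G := G.smooth 1
  have hGd : Differentiable ℝ G := hG1.differentiable one_ne_zero
  have hdbarc : Continuous (dbar G) := by
    have h := hG1.continuous_fderiv one_ne_zero
    unfold dbar
    fun_prop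
  have hekc : Continuous (ek k) := (contDiff_ek k).continuous
  have hbound : ∀ c : ℂ → ℂ, (∀ w, ‖c w‖ = 1) →
      ∀ w, ‖c w * dbar G w / (z - w)‖ₑ ≤ ‖fderiv ℝ G w‖ₑ * ‖z - w‖ₑ⁻¹ := by
    intro c hc w
    rw [div_eq_mul_inv, enorm_mul, enorm_mul]
    have h1 : ‖c w‖ₑ = 1 := by rw [← ofReal_norm, hc, ENNReal.ofReal_one]
    rw [h1, one_mul]
    gcongr
    · exact enorm_le_iff_norm_le.2 (norm_dbar_le G w)
    · rcases eq_or_ne (z - w) 0 with h | h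
      · simp [h]
      · rw [enorm_inv h]
  have hbound_int : ∀ c : ℂ → ℂ, (∀ w, ‖c w‖ = 1) →
      ‖∫ w, c w * dbar G w / (z - w)‖ ≤ T.toReal := by
    intro c hc
    have h : ‖∫ w, c w * dbar G w / (z - w)‖ₑ ≤ T :=
      (enorm_integral_le_lintegral_enorm _).trans (lintegral_mono (hbound c hc))
    rw [← toReal_enorm]
    exact ENNReal.toReal_mono hT h
  have h_integ' : Integrable fun w => ek k w * dbar G w / (z - w) := by
    refine ⟨?_, ?_⟩
    · exact (((hekc.mul hdbarc).measurable).div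
        (measurable_const.sub measurable_id)).aestronglyMeasurable
    · exact (lintegral_mono (hbound _ (norm_ek k))).trans_lt hT.lt_top
  have hGz : Real.pi * ‖G z‖ ≤ T.toReal := by
    have h := integral_dbar_div_sub hG1 G.tendsto_cocompact (fun w => (hC w).2) z
    have h2 := hbound_int (fun _ => 1) (by simp)
    simp only [one_mul] at h2
    rwa [h, norm_mul, norm_real, Real.norm_of_nonneg Real.pi_pos.le] at h2
  have hF := integral_dbar_div_sub (F := fun w => ek k w * G w) (C := ‖k‖ * C + C)
    ((contDiff_ek k).mul hG1)
    (squeeze_zero_norm (fun w => by rw [norm_mul, norm_ek, one_mul])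
      (tendsto_zero_iff_norm_tendsto_zero.1 G.tendsto_cocompact))
    (fun w => by
      rw [fderiv_fun_mul ((contDiff_ek k).differentiable one_ne_zero w) (hGd w)]
      have h1 : ‖ek k w • fderiv ℝ G w + G w • fderiv ℝ (ek k) w‖ ≤
          ‖fderiv ℝ G w‖ + ‖G w‖ * ‖k‖ := by
        refine (norm_add_le _ _).trans ?_
        rw [norm_smul, norm_smul, norm_ek, one_mul]
        gcongr
        exact norm_fderiv_ek_le k w
      calc _ ≤ (1 + ‖w‖ ^ 2) * (‖fderiv ℝ G w‖ + ‖G w‖ * ‖k‖) := by gcongr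
        _ = ‖k‖ * ((1 + ‖w‖ ^ 2) * ‖G w‖) + (1 + ‖w‖ ^ 2) * ‖fderiv ℝ G w‖ := by ring
        _ ≤ _ := by
          gcongr
          · exact (hC w).1
          · exact (hC w).2) z
  have hsplit : (fun w => dbar (fun w => ek k w * G w) w / (z - w)) = fun w =>
      I * k / 2 * (ek k w * G w / (z - w)) + ek k w * dbar G w / (z - w) := by
    funext w
    rw [dbar_ek_mul k (hGd w)]
    ring
  rw [hsplit, integral_add (h_integ.const_mul _) h_integ', integral_const_mul] at hF
  have hnorm : ‖k‖ / 2 * ‖∫ w, ek k w * G w / (z - w)‖ ≤ 2 * T.toReal := by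
    calc ‖k‖ / 2 * ‖∫ w, ek k w * G w / (z - w)‖
        = ‖I * k / 2 * ∫ w, ek k w * G w / (z - w)‖ := by simp
      _ = ‖Real.pi * (ek k z * G z) - ∫ w, ek k w * dbar G w / (z - w)‖ := by
          rw [← hF, add_sub_cancel_right]
      _ ≤ Real.pi * ‖G z‖ + T.toReal := by
          refine (norm_sub_le _ _).trans ?_
          rw [norm_mul, norm_mul, norm_ek, one_mul, norm_real,
            Real.norm_of_nonneg Real.pi_pos.le]
          gcongr
          exact hbound_int _ (norm_ek k)
      _ ≤ 2 * T.toReal := by linarith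
  rw [← ENNReal.ofReal_toReal hT, ← ENNReal.ofReal_mul (by positivity), ← ofReal_norm]
  refine ENNReal.ofReal_le_ofReal ?_
  rw [dbarInv, norm_mul, norm_inv, norm_real, Real.norm_of_nonneg Real.pi_pos.le]
  have h : ‖∫ w, ek k w * G w / (z - w)‖ ≤ 4 * ‖k‖⁻¹ * T.toReal := by
    rw [mul_right_comm, ← div_eq_mul_inv, le_div_iff₀ hk0]
    linarith
  calc Real.pi⁻¹ * ‖∫ w, ek k w * G w / (z - w)‖ ≤ Real.pi⁻¹ * (4 * ‖k‖⁻¹ * T.toReal) := by gcongr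
    _ = _ := by ring

/-- Estimate \eqref{per}: `‖∂̄⁻¹[e_{-k} G]‖_p ≤ C |k|⁻¹ ‖∇G‖_{2p/(p+2)}`. -/
theorem stmt4 (p : ℝ) (hp2 : 2 < p) :
    ∃ C : ℝ, 0 < C ∧ ∀ (G : 𝓢(ℂ, ℂ)) (k : ℂ), k ≠ 0 →
      eLpNorm (dbarInv fun z => ek (-k) z * G z) (ENNReal.ofReal p) volume ≤
        ENNReal.ofReal (C * ‖k‖⁻¹) *
          eLpNorm (fun z => fderiv ℝ (⇑G) z) (ENNReal.ofReal (2 * p / (p + 2))) volume := by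
  obtain ⟨K, hK, hHLS⟩ := exists_lintegral_rpow_potential_le hp2
  have hp0 : 0 < p := by linarith
  have hq0 : 0 < 2 * p / (p + 2) := by positivity
  refine ⟨4 / Real.pi * (K.toReal + 1), by positivity, fun G k hk => ?_⟩
  rw [eLpNorm_eq_lintegral_rpow_enorm_toReal (ENNReal.ofReal_pos.2 hp0).ne' ENNReal.ofReal_ne_top,
    eLpNorm_eq_lintegral_rpow_enorm_toReal (ENNReal.ofReal_pos.2 hq0).ne' ENNReal.ofReal_ne_top,
    ENNReal.toReal_ofReal hp0.le, ENNReal.toReal_ofReal hq0.le]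
  obtain ⟨C, hC⟩ := G.exists_one_add_norm_sq_mul_le
  have hmeas : Measurable fun w => ‖fderiv ℝ G w‖ₑ :=
    ((G.smooth 1).continuous_fderiv one_ne_zero).enorm.measurable
  have hHLS' := hHLS _ hmeas (ENNReal.ofReal C) ENNReal.ofReal_ne_top fun w => by
    rw [← ofReal_norm]
    refine ENNReal.ofReal_le_ofReal (le_trans ?_ (hC w).2)
    exact le_mul_of_one_le_left (norm_nonneg _) (by nlinarith [sq_nonneg ‖w‖])
  set D := ENNReal.ofReal (4 / Real.pi * ‖k‖⁻¹) with hD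
  have hpt : ∀ z, ‖dbarInv (fun z => ek (-k) z * G z) z‖ₑ ≤
      D * ∫⁻ w, ‖fderiv ℝ G w‖ₑ * ‖z - w‖ₑ⁻¹ := fun z => by
    simpa only [norm_neg] using enorm_dbarInv_ek_mul_le G (neg_ne_zero.2 hk) z
  calc (∫⁻ z, ‖dbarInv (fun z => ek (-k) z * G z) z‖ₑ ^ p) ^ (1 / p)
      ≤ (∫⁻ z, D ^ p * (∫⁻ w, ‖fderiv ℝ G w‖ₑ * ‖z - w‖ₑ⁻¹) ^ p) ^ (1 / p) := by
        gcongr with z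
        rw [← ENNReal.mul_rpow_of_nonneg _ _ hp0.le]
        gcongr
        exact hpt z
    _ = D * (∫⁻ z, (∫⁻ w, ‖fderiv ℝ G w‖ₑ * ‖z - w‖ₑ⁻¹) ^ p) ^ (1 / p) := by
        rw [lintegral_const_mul' _ _ (ENNReal.rpow_ne_top_of_nonneg hp0.le ENNReal.ofReal_ne_top),
          ENNReal.mul_rpow_of_nonneg _ _ (by positivity), ← ENNReal.rpow_mul,
          mul_one_div_cancel hp0.ne', ENNReal.rpow_one]
    _ ≤ D * (ENNReal.ofReal (K.toReal + 1) *
          (∫⁻ w, ‖fderiv ℝ G w‖ₑ ^ (2 * p / (p + 2))) ^ (1 / (2 * p / (p + 2)))) := by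
        gcongr
        refine hHLS'.trans ?_
        gcongr
        rw [ENNReal.le_ofReal_iff_toReal_le hK (by positivity)]
        linarith
    _ = _ := by
        rw [← mul_assoc, hD, ← ENNReal.ofReal_mul (by positivity)]
        ring_nf
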